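/- Fix an integer d ≥ 1, p ∈ (1,∞), a penalty function φ, and let (μ_t)_{t≥0} be a convolution semigroup in 𝒫_p(ℝ^d) with 𝒲_p(μ_t, δ_0) → 0 as t ↓ 0. Then for every f ∈ C₀(ℝ^d), lim_{t↓0} ‖𝒮(t)f − f‖_∞ = 0. -/

import Mathlib

open MeasureTheory Filter Topology ENNReal NNReal Set ZeroAtInfty
noncomputable section

/-- Euclidean space ℝ^d. -/
abbrev Ed (d : ℕ) := EuclideanSpace ℝ (Fin d)

/-- `𝒫_p(ℝ^d)`: Borel probability measures with finite `p`-th moment. -/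
def MemPp {d : ℕ} (p : ℝ) (μ : Measure (Ed d)) : Prop :=
  IsProbabilityMeasure μ ∧ ∫⁻ x, (‖x‖₊ : ℝ≥0∞) ^ p ∂μ < ∞

/-- `γ` is a coupling of `μ` and `ν`. -/
def IsCoupling {d : ℕ} (γ : Measure (Ed d × Ed d)) (μ ν : Measure (Ed d)) : Prop :=
  γ.map Prod.fst = μ ∧ γ.map Prod.snd = ν

/-- The `p`-Wasserstein distance `𝒲_p(μ, ν)`. -/
def Wp {d : ℕ} (p : ℝ) (μ ν : Measure (Ed d)) : ℝ :=
  (⨅ γ ∈ {γ : Measure (Ed d × Ed d) | IsCoupling γ μ ν},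
    (∫⁻ q, (‖q.2 - q.1‖₊ : ℝ≥0∞) ^ p ∂γ) ^ (1 / p)).toReal

/-- The scaled penalty `φ_t(r) = t·φ(r/t)` for `t > 0`; `φ_0(0) = 0`, `φ_0(r) = ∞` for `r > 0`. -/
def phit (φ : ℝ≥0 → ℝ≥0∞) (t : ℝ) (r : ℝ≥0) : ℝ≥0∞ :=
  if 0 < t then (t.toNNReal : ℝ≥0∞) * φ (r / t.toNNReal) else (if r = 0 then 0 else ∞)

/-- `φ` is a penalty function: lower semicontinuous, convex, increasing, not constant,
`φ(0) = 0`, and `x ↦ φ(x^{1/p})` is convex. -/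
structure IsPenalty (p : ℝ) (φ : ℝ≥0 → ℝ≥0∞) : Prop where
  lsc : LowerSemicontinuous φ
  convex : ∀ a b l m : ℝ≥0, l + m = 1 →
    φ (l * a + m * b) ≤ (l : ℝ≥0∞) * φ a + (m : ℝ≥0∞) * φ b
  mono : Monotone φ
  not_const : ∃ a b, φ a ≠ φ b
  map_zero : φ 0 = 0
  convex_rpow : ∀ a b l m : ℝ≥0, l + m = 1 →
    φ ((l * a + m * b) ^ (1 / p)) ≤ (l : ℝ≥0∞) * φ (a ^ (1 / p)) + (m : ℝ≥0∞) * φ (b ^ (1 / p))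

/-- The convex conjugate `φ*(y) = sup_{x ≥ 0} (xy − φ(x))`. -/
def phiStar (φ : ℝ≥0 → ℝ≥0∞) (y : ℝ≥0) : ℝ≥0∞ :=
  ⨆ x : ℝ≥0, ((x * y : ℝ≥0) : ℝ≥0∞) - φ x

/-- The one-step operator `S(t)f(x) = sup_ν ( ∫ f(x+y) ν(dy) − φ_t(𝒲_p(μ_t, ν)) )`. -/
def Sop {d : ℕ} (p : ℝ) (φ : ℝ≥0 → ℝ≥0∞) (μt : Measure (Ed d)) (t : ℝ)
    (f : Ed d → ℝ) (x : Ed d) : ℝ :=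
  sSup { r : ℝ | ∃ ν : Measure (Ed d), MemPp p ν ∧ ∃ c : ℝ, 0 ≤ c ∧
    phit φ t (Wp p μt ν).toNNReal ≤ ENNReal.ofReal c ∧ r = (∫ y, f (x + y) ∂ν) - c }

/-- The iterated operator `𝒮ⁿ(t) = S(2⁻ⁿ)^{∘ k} ∘ S(t − k·2⁻ⁿ)`, `k = ⌊2ⁿ t⌋`. -/
def SiterN {d : ℕ} (p : ℝ) (φ : ℝ≥0 → ℝ≥0∞) (μ : ℝ → Measure (Ed d)) (n : ℕ) (t : ℝ)
    (f : Ed d → ℝ) : Ed d → ℝ :=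
  (fun g => Sop p φ (μ ((2 : ℝ) ^ n)⁻¹) ((2 : ℝ) ^ n)⁻¹ g)^[⌊(2:ℝ)^n * t⌋₊]
    (Sop p φ (μ (t - ⌊(2:ℝ)^n * t⌋₊ * ((2:ℝ)^n)⁻¹)) (t - ⌊(2:ℝ)^n * t⌋₊ * ((2:ℝ)^n)⁻¹) f)

/-- The limiting operator `𝒮(t)f = lim_n 𝒮ⁿ(t)f` (a decreasing limit, i.e. an infimum). -/
def Slim {d : ℕ} (p : ℝ) (φ : ℝ≥0 → ℝ≥0∞) (μ : ℝ → Measure (Ed d)) (t : ℝ)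
    (f : Ed d → ℝ) (x : Ed d) : ℝ :=
  ⨅ n : ℕ, SiterN p φ μ n t f x

/-- `f ∈ C₀(ℝ^d)`: continuous and vanishing at infinity. -/
def IsC0 {d : ℕ} (f : Ed d → ℝ) : Prop :=
  Continuous f ∧ Tendsto f (cocompact (Ed d)) (𝓝 0)

/-- `(μ_t)_{t ≥ 0}` is a convolution semigroup in `𝒫_p(ℝ^d)`. -/
def IsConvSemigroup {d : ℕ} (p : ℝ) (μ : ℝ → Measure (Ed d)) : Prop :=
  μ 0 = Measure.dirac 0 ∧ (∀ s t : ℝ, 0 ≤ s → 0 ≤ t → μ (s + t) = (μ s).conv (μ t)) ∧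
    ∀ t : ℝ, 0 ≤ t → MemPp p (μ t)

/-- `𝒲_p(μ_t, δ_0) → 0` as `t ↓ 0`. -/
def WContinuousAtZero {d : ℕ} (p : ℝ) (μ : ℝ → Measure (Ed d)) : Prop :=
  Tendsto (fun t => Wp p (μ t) (Measure.dirac 0)) (𝓝[>] (0:ℝ)) (𝓝 0)

/-- The semigroup of the underlying Lévy process, `S^μ(t)f(x) = ∫ f(x+y) μ_t(dy)`. -/
def Smu {d : ℕ} (μ : ℝ → Measure (Ed d)) (t : ℝ) (f : Ed d → ℝ) (x : Ed d) : ℝ :=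
  ∫ y, f (x + y) ∂(μ t)

/-- `f ∈ D(A^μ)` with `A^μ f = Af`: `(S^μ(t)f − f)/t → Af` uniformly as `t ↓ 0`. -/
def HasGenerator {d : ℕ} (μ : ℝ → Measure (Ed d)) (f Af : Ed d → ℝ) : Prop :=
  TendstoUniformly (fun t x => (Smu μ t f x - f x) / t) Af (𝓝[>] (0:ℝ))

/-- `f ∈ C₀¹(ℝ^d)`: continuously differentiable, vanishing at infinity, with gradient
vanishing at infinity. -/
def IsC01 {d : ℕ} (f : Ed d → ℝ) : Prop :=
  IsC0 f ∧ ContDiff ℝ 1 f ∧ Tendsto (fun x => gradient f x) (cocompact (Ed d)) (𝓝 0)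

/-!
The proof compares `𝒮(t)f` with the linear semigroup `S^μ(t)f`. A uniformly continuous function `f`
on a normed space is Lipschitz up to an arbitrarily small error: `|f a - f b| ≤ K |a - b| + ε`.
Integrating this bound against couplings gives `∫ f dν ≤ ∫ f dμ_t + K 𝒲_p(μ_t, ν) + ε`, and the
Fenchel-Young inequality `K w ≤ φ_t(w) + t φ*(K)` absorbs the Wasserstein term into the penalty, so
`S(t)f ≤ S^μ(t)f + t φ*(K) + ε`. Here `φ*(K) < ∞`, because convexity of `x ↦ φ(x^{1/p})` forces `φ`
to grow at least like `r ↦ r^p` with `p > 1`. On the other hand `S^μ(t)f ≤ S(t)f`, as `ν = μ_t` is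
not penalized, and iterating gives `S^μ(t)f ≤ 𝒮(t)f`, while `𝒮(t)f ≤ S(t)f` for `t < 1`. Finally
`|S^μ(t)f - f| ≤ K 𝒲_p(μ_t, δ_0) + ε`, again by the coupling bound.
-/

section CoarselyLipschitz

variable {α β : Type*} [PseudoMetricSpace α] [PseudoMetricSpace β]

/-- `g` is Lipschitz with constant `K` up to the additive error `ε`. On normed spaces, having such a
bound for every `ε > 0` is a quantitative form of uniform continuity which is stable under averaging
over translates and under suprema. -/
def CoarselyLipschitzWith (K : ℝ≥0) (ε : ℝ) (g : α → β) : Prop :=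
  ∀ a b, dist (g a) (g b) ≤ K * dist a b + ε

namespace CoarselyLipschitzWith

variable {K : ℝ≥0} {ε : ℝ}

theorem of_le_add {g : α → ℝ} (h : ∀ a b, g a ≤ g b + (K * dist a b + ε)) :
    CoarselyLipschitzWith K ε g := fun a b => by
  have hba := h b a
  rw [dist_comm b a] at hba
  exact abs_sub_le_iff.2 ⟨by linarith [h a b], by linarith⟩

theorem le_add {g : α → ℝ} (h : CoarselyLipschitzWith K ε g) (a b : α) :
    g a ≤ g b + (K * dist a b + ε) := by
  linarith [le_of_abs_le (h a b)]

theorem comp_add_left {E : Type*} [SeminormedAddCommGroup E] {g : E → β}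
    (h : CoarselyLipschitzWith K ε g) (x : E) : CoarselyLipschitzWith K ε fun y => g (x + y) :=
  fun a b => by simpa only [dist_add_left] using h (x + a) (x + b)

theorem integrable {E : Type*} [SeminormedAddCommGroup E] [MeasurableSpace E] {m : Measure E}
    [IsFiniteMeasure m] {g : E → ℝ} (h : CoarselyLipschitzWith K ε g)
    (hg : AEStronglyMeasurable g m) (hm : Integrable (fun y => ‖y‖) m) : Integrable g m := by
  refine Integrable.mono' ((hm.const_mul (K : ℝ)).add (integrable_const (ε + ‖g 0‖))) hg
    (ae_of_all _ fun y => ?_)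
  have hy := h y 0
  rw [dist_zero_right, Real.dist_eq] at hy
  simp only [Pi.add_apply, Real.norm_eq_abs]
  linarith [abs_sub_abs_le_abs_sub (g y) (g 0)]

end CoarselyLipschitzWith

theorem uniformContinuous_of_forall_coarselyLipschitzWith {g : α → β}
    (h : ∀ ε > 0, ∃ K : ℝ≥0, CoarselyLipschitzWith K ε g) : UniformContinuous g := by
  refine Metric.uniformContinuous_iff.2 fun ε hε => ?_
  obtain ⟨K, hK⟩ := h (ε / 2) (half_pos hε)
  refine ⟨ε / 2 / (K + 1), by positivity, fun {a b} hab => ?_⟩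
  have hKδ : K * dist a b < ε / 2 :=
    calc K * dist a b ≤ dist a b * (K + 1) := by nlinarith [dist_nonneg (x := a) (y := b)]
      _ < ε / 2 := (lt_div_iff₀ (by positivity)).1 hab
  linarith [hK a b]

-- Cut the segment from `a` to `b` into `N = ⌊|a - b| / δ⌋ + 1` pieces of length less than `δ`.
theorem exists_coarselyLipschitzWith_of_uniformContinuous {E : Type*} [SeminormedAddCommGroup E]
    [NormedSpace ℝ E] {g : E → β} (hg : UniformContinuous g) {ε : ℝ} (hε : 0 < ε) :
    ∃ K : ℝ≥0, CoarselyLipschitzWith K ε g := by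
  obtain ⟨δ, hδ, hgδ⟩ := Metric.uniformContinuous_iff.1 hg ε hε
  refine ⟨⟨ε / δ, by positivity⟩, fun a b => ?_⟩
  set N := ⌊dist a b / δ⌋₊ + 1 with hN
  have hN0 : (0 : ℝ) < N := by positivity
  have hlen : dist a b / N < δ := by
    have hlt := Nat.lt_floor_add_one (dist a b / δ)
    rw [div_lt_iff₀ hδ] at hlt
    rw [div_lt_iff₀ hN0, hN]
    push_cast
    linarith
  let u : ℕ → E := fun k => AffineMap.lineMap a b (k / N : ℝ)
  have hstep (k : ℕ) : dist (u k) (u (k + 1)) = dist a b / N := by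
    have hk : ((k + 1 : ℕ) / N : ℝ) = k / N + 1 / N := by push_cast; ring
    rw [dist_lineMap_lineMap, hk, dist_self_add_right, Real.norm_of_nonneg (by positivity)]
    ring
  have hu0 : u 0 = a := by simp [u]
  have huN : u N = b := by simp [u, hN0.ne']
  calc dist (g a) (g b) = dist (g (u 0)) (g (u N)) := by rw [hu0, huN]
    _ ≤ ∑ _k ∈ Finset.range N, ε := dist_le_range_sum_of_dist_le (f := fun k => g (u k)) N
        fun {k} _ => (hgδ ((hstep k).trans_lt hlen)).le
    _ = N * ε := by rw [Finset.sum_const, Finset.card_range, nsmul_eq_mul]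
    _ ≤ (dist a b / δ + 1) * ε := by
        rw [hN]
        push_cast
        gcongr
        exact Nat.floor_le (by positivity)
    _ = ε / δ * dist a b + ε := by ring

end CoarselyLipschitz

section Wasserstein

variable {d : ℕ} {p : ℝ} {μ ν : Measure (Ed d)} {γ : Measure (Ed d × Ed d)}

/-- The `L^p` transport cost of a plan `γ`, as an extended nonnegative number. -/
def transportCost (p : ℝ) (γ : Measure (Ed d × Ed d)) : ℝ≥0∞ :=
  eLpNorm (fun q => q.2 - q.1) (ENNReal.ofReal p) γ

theorem Wp_eq_toReal_iInf_transportCost (hp : 0 < p) (μ ν : Measure (Ed d)) :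
    Wp p μ ν = (⨅ γ ∈ {γ | IsCoupling γ μ ν}, transportCost p γ).toReal := by
  simp only [Wp, transportCost, eLpNorm_eq_lintegral_rpow_enorm_toReal
    (ENNReal.ofReal_pos.2 hp).ne' ENNReal.ofReal_ne_top, ENNReal.toReal_ofReal hp.le]
  rfl

theorem Wp_nonneg : 0 ≤ Wp p μ ν := ENNReal.toReal_nonneg

theorem isCoupling_prod (μ ν : Measure (Ed d)) [IsProbabilityMeasure μ] [IsProbabilityMeasure ν] :
    IsCoupling (μ.prod ν) μ ν :=
  ⟨measurePreserving_fst.map_eq, measurePreserving_snd.map_eq⟩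

theorem isCoupling_map_diag (μ : Measure (Ed d)) : IsCoupling (μ.map fun x => (x, x)) μ μ :=
  ⟨(Measure.map_map measurable_fst (by fun_prop)).trans Measure.map_id,
    (Measure.map_map measurable_snd (by fun_prop)).trans Measure.map_id⟩

namespace MemPp

theorem memLp_id (hp : 0 < p) (hμ : MemPp p μ) : MemLp id (ENNReal.ofReal p) μ := by
  refine ⟨by fun_prop, ?_⟩
  rw [eLpNorm_lt_top_iff_lintegral_rpow_enorm_lt_top (ENNReal.ofReal_pos.2 hp).ne'
    ENNReal.ofReal_ne_top, ENNReal.toReal_ofReal hp.le]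
  exact hμ.2

theorem integrable_norm (hp : 1 ≤ p) (hμ : MemPp p μ) : Integrable (fun y => ‖y‖) μ := by
  have := hμ.1
  exact ((hμ.memLp_id (by positivity)).integrable (ENNReal.one_le_ofReal.2 hp)).norm

theorem dirac_zero (hp : 0 < p) : MemPp p (Measure.dirac (0 : Ed d)) :=
  ⟨inferInstance, by simp [lintegral_dirac, hp]⟩

theorem integrable_comp_add (hp : 1 ≤ p) (hμ : MemPp p μ) {g : Ed d → ℝ}
    (hg : UniformContinuous g) (x : Ed d) : Integrable (fun y => g (x + y)) μ := by
  have := hμ.1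
  obtain ⟨K, hK⟩ := exists_coarselyLipschitzWith_of_uniformContinuous hg one_pos
  have hcont := hg.continuous
  exact (hK.comp_add_left x).integrable (by fun_prop) (hμ.integrable_norm hp)

theorem iInf_transportCost_ne_top (hp : 0 < p) (hμ : MemPp p μ) (hν : MemPp p ν) :
    ⨅ γ ∈ {γ | IsCoupling γ μ ν}, transportCost p γ ≠ ∞ := by
  have := hμ.1
  have := hν.1
  have hcost : MemLp (fun q : Ed d × Ed d => q.2 - q.1) (ENNReal.ofReal p) (μ.prod ν) :=
    ((hν.memLp_id hp).comp_measurePreserving measurePreserving_snd).sub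
      ((hμ.memLp_id hp).comp_measurePreserving measurePreserving_fst)
  exact ((iInf₂_le (μ.prod ν) (isCoupling_prod μ ν)).trans_lt hcost.eLpNorm_lt_top).ne

theorem exists_isCoupling_transportCost_lt (hp : 0 < p) (hμ : MemPp p μ) (hν : MemPp p ν) {a : ℝ}
    (ha : Wp p μ ν < a) : ∃ γ, IsCoupling γ μ ν ∧ transportCost p γ < ENNReal.ofReal a := by
  rw [Wp_eq_toReal_iInf_transportCost hp,
    ← ENNReal.lt_ofReal_iff_toReal_lt (hμ.iInf_transportCost_ne_top hp hν)] at ha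
  simpa only [iInf_lt_iff, mem_ofPred_eq, exists_prop] using ha

end MemPp

theorem Wp_self (hp : 0 < p) (μ : Measure (Ed d)) : Wp p μ μ = 0 := by
  have hcost : transportCost p (μ.map fun x => (x, x)) = 0 := by
    rw [transportCost, eLpNorm_map_measure (by fun_prop) (by fun_prop)]
    simp [Function.comp_def]
  have hinf : ⨅ γ ∈ {γ | IsCoupling γ μ μ}, transportCost p γ = 0 :=
    nonpos_iff_eq_zero.1 ((iInf₂_le (μ.map fun x => (x, x)) (isCoupling_map_diag μ)).trans_eq hcost)
  rw [Wp_eq_toReal_iInf_transportCost hp, hinf, ENNReal.toReal_zero]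

namespace IsCoupling

theorem isProbabilityMeasure [IsProbabilityMeasure μ] (hγ : IsCoupling γ μ ν) :
    IsProbabilityMeasure γ := by
  refine ⟨?_⟩
  rw [← preimage_univ (f := Prod.fst), ← Measure.map_apply measurable_fst .univ, hγ.1]
  exact measure_univ

theorem abs_integral_sub_le [IsProbabilityMeasure μ] (hp : 1 ≤ p) (hγ : IsCoupling γ μ ν)
    (hcost : transportCost p γ ≠ ∞) {K : ℝ≥0} {ε : ℝ} {g : Ed d → ℝ}
    (hg : CoarselyLipschitzWith K ε g) (hgμ : Integrable g μ) (hgν : Integrable g ν) :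
    |∫ y, g y ∂ν - ∫ y, g y ∂μ| ≤ K * (transportCost p γ).toReal + ε := by
  have := hγ.isProbabilityMeasure
  have hfst : MeasurePreserving Prod.fst γ μ := ⟨measurable_fst, hγ.1⟩
  have hsnd : MeasurePreserving Prod.snd γ ν := ⟨measurable_snd, hγ.2⟩
  have hg₁ : Integrable (fun q : Ed d × Ed d => g q.1) γ := hfst.integrable_comp_of_integrable hgμ
  have hg₂ : Integrable (fun q : Ed d × Ed d => g q.2) γ := hsnd.integrable_comp_of_integrable hgν
  have hmem : MemLp (fun q : Ed d × Ed d => q.2 - q.1) (ENNReal.ofReal p) γ :=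
    ⟨by fun_prop, hcost.lt_top⟩
  have hnorm : Integrable (fun q : Ed d × Ed d => ‖q.2 - q.1‖) γ :=
    (hmem.integrable (ENNReal.one_le_ofReal.2 hp)).norm
  have hjensen : ∫ q, ‖q.2 - q.1‖ ∂γ ≤ (transportCost p γ).toReal := by
    rw [integral_norm_eq_lintegral_enorm hmem.1, ← eLpNorm_one_eq_lintegral_enorm]
    exact ENNReal.toReal_mono hcost
      (eLpNorm_le_eLpNorm_of_exponent_le (ENNReal.one_le_ofReal.2 hp) hmem.1)
  calc |∫ y, g y ∂ν - ∫ y, g y ∂μ| = |∫ q, (g q.2 - g q.1) ∂γ| := by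
        rw [integral_sub hg₂ hg₁, ← hγ.1, ← hγ.2,
          integral_map measurable_fst.aemeasurable (hγ.1 ▸ hgμ.1),
          integral_map measurable_snd.aemeasurable (hγ.2 ▸ hgν.1)]
    _ ≤ ∫ q, |g q.2 - g q.1| ∂γ := abs_integral_le_integral_abs
    _ ≤ ∫ q, (K * ‖q.2 - q.1‖ + ε) ∂γ :=
        integral_mono (hg₂.sub hg₁).abs ((hnorm.const_mul _).add (integrable_const _)) fun q =>
          dist_eq_norm q.2 q.1 ▸ hg q.2 q.1
    _ = K * ∫ q, ‖q.2 - q.1‖ ∂γ + ε := by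
        rw [integral_add (hnorm.const_mul _) (integrable_const _), integral_const_mul]
        simp
    _ ≤ K * (transportCost p γ).toReal + ε := by gcongr

end IsCoupling

theorem abs_integral_sub_le_mul_Wp_add (hp : 1 ≤ p) (hμ : MemPp p μ) (hν : MemPp p ν) {K : ℝ≥0}
    {ε : ℝ} {g : Ed d → ℝ} (hg : CoarselyLipschitzWith K ε g) (hgμ : Integrable g μ)
    (hgν : Integrable g ν) : |∫ y, g y ∂ν - ∫ y, g y ∂μ| ≤ K * Wp p μ ν + ε := by
  have := hμ.1
  have hlim : Tendsto (fun a : ℝ => K * a + ε) (𝓝[>] Wp p μ ν) (𝓝 (K * Wp p μ ν + ε)) :=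
    (Continuous.tendsto (by fun_prop) _).mono_left nhdsWithin_le_nhds
  refine ge_of_tendsto hlim (eventually_nhdsWithin_of_forall fun a ha => ?_)
  obtain ⟨γ, hγ, hcost⟩ := hμ.exists_isCoupling_transportCost_lt (by positivity) hν ha
  have hcost_le : (transportCost p γ).toReal ≤ a :=
    ENNReal.toReal_le_of_le_ofReal (Wp_nonneg.trans (mem_Ioi.1 ha).le) hcost.le
  calc |∫ y, g y ∂ν - ∫ y, g y ∂μ| ≤ K * (transportCost p γ).toReal + ε :=
        hγ.abs_integral_sub_le hp hcost.ne_top hg hgμ hgν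
    _ ≤ K * a + ε := by gcongr

end Wasserstein

section Penalty

variable {p : ℝ} {φ : ℝ≥0 → ℝ≥0∞}

theorem phit_zero_right (hφ0 : φ 0 = 0) (t : ℝ) : phit φ t 0 = 0 := by
  simp [phit, hφ0]

theorem mul_le_add_phiStar (φ : ℝ≥0 → ℝ≥0∞) (x y : ℝ≥0) :
    ((x * y : ℝ≥0) : ℝ≥0∞) ≤ φ x + phiStar φ y :=
  tsub_le_iff_left.1 (le_iSup (fun x : ℝ≥0 => ((x * y : ℝ≥0) : ℝ≥0∞) - φ x) x)

theorem mul_le_phit_add_mul_phiStar (φ : ℝ≥0 → ℝ≥0∞) (t : ℝ) (x y : ℝ≥0) :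
    ((x * y : ℝ≥0) : ℝ≥0∞) ≤ phit φ t x + t.toNNReal * phiStar φ y := by
  rcases lt_or_ge 0 t with ht | ht
  · have hs : t.toNNReal ≠ 0 := (Real.toNNReal_pos.2 ht).ne'
    calc ((x * y : ℝ≥0) : ℝ≥0∞) = t.toNNReal * ((x / t.toNNReal * y : ℝ≥0) : ℝ≥0∞) := by
          rw [← ENNReal.coe_mul, ← mul_assoc, mul_div_cancel₀ _ hs]
      _ ≤ t.toNNReal * (φ (x / t.toNNReal) + phiStar φ y) := by
          gcongr
          exact mul_le_add_phiStar φ _ y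
      _ = phit φ t x + t.toNNReal * phiStar φ y := by rw [phit, if_pos ht, mul_add]
  · rcases eq_or_ne x 0 with rfl | hx
    · simp
    · simp [phit, ht.not_gt, hx]

theorem IsPenalty.rpow_div_mul_le (hp : 0 < p) (hφ : IsPenalty p φ) {r₀ r : ℝ≥0} (hr₀ : 0 < r₀)
    (hr : r₀ ≤ r) : (((r / r₀) ^ p : ℝ≥0) : ℝ≥0∞) * φ r₀ ≤ φ r := by
  have hr_pos : 0 < r := hr₀.trans_le hr
  have hweight : (r₀ / r) ^ p ≤ 1 := NNReal.rpow_le_one (div_le_one_of_le₀ hr zero_le) hp.le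
  have hpoint : ((r₀ / r) ^ p * r ^ p) ^ (1 / p) = r₀ := by
    rw [← NNReal.mul_rpow, div_mul_cancel₀ _ hr_pos.ne', one_div, NNReal.rpow_rpow_inv hp.ne']
  have hconv := hφ.convex_rpow (r ^ p) 0 ((r₀ / r) ^ p) (1 - (r₀ / r) ^ p)
    (add_tsub_cancel_of_le hweight)
  rw [mul_zero, add_zero, hpoint, one_div, NNReal.rpow_rpow_inv hp.ne',
    NNReal.zero_rpow (inv_ne_zero hp.ne'), hφ.map_zero, mul_zero, add_zero] at hconv
  have hinv : (r / r₀) ^ p * (r₀ / r) ^ p = 1 := by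
    rw [← NNReal.mul_rpow, div_mul_div_cancel₀ hr₀.ne', div_self hr_pos.ne', NNReal.one_rpow]
  calc (((r / r₀) ^ p : ℝ≥0) : ℝ≥0∞) * φ r₀
      ≤ ((r / r₀) ^ p : ℝ≥0) * (((r₀ / r) ^ p : ℝ≥0) * φ r) := by gcongr
    _ = φ r := by rw [← mul_assoc, ← ENNReal.coe_mul, hinv, ENNReal.coe_one, one_mul]

theorem IsPenalty.exists_pos (hφ : IsPenalty p φ) : ∃ r, 0 < r ∧ 0 < φ r := by
  obtain ⟨a, b, hab⟩ := hφ.not_const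
  obtain ⟨r, hr⟩ : ∃ r, φ r ≠ 0 := by
    by_contra! h
    exact hab ((h a).trans (h b).symm)
  exact ⟨r, pos_iff_ne_zero.2 fun h => hr (h ▸ hφ.map_zero), pos_iff_ne_zero.2 hr⟩

theorem IsPenalty.exists_forall_ge_mul_le (hp : 1 < p) (hφ : IsPenalty p φ) (y : ℝ≥0) :
    ∃ R : ℝ≥0, ∀ r, R ≤ r → ((r * y : ℝ≥0) : ℝ≥0∞) ≤ φ r := by
  obtain ⟨r₀, hr₀, hφr₀⟩ := hφ.exists_pos
  -- `φ r₀` may be infinite, so it is replaced by a positive real below it.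
  obtain ⟨m, hm, hmφ⟩ := ENNReal.lt_iff_exists_nnreal_btwn.1 hφr₀
  have hm_pos : 0 < m := by exact_mod_cast hm
  obtain ⟨A, hA⟩ := eventually_atTop.1
    ((NNReal.tendsto_rpow_atTop (sub_pos.2 hp)).eventually_ge_atTop (r₀ * y / m))
  refine ⟨r₀ * max 1 A, fun r hr => ?_⟩
  have hr_div : max 1 A ≤ r / r₀ := (le_div_iff₀' hr₀).2 hr
  have hone : 1 ≤ r / r₀ := (le_max_left 1 A).trans hr_div
  have hpow : r₀ * y / m ≤ (r / r₀) ^ (p - 1) := hA _ ((le_max_right 1 A).trans hr_div)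
  have hgrowth : r * y ≤ (r / r₀) ^ p * m :=
    calc r * y = r / r₀ * (r₀ * y / m) * m := by field_simp
      _ ≤ r / r₀ * (r / r₀) ^ (p - 1) * m := by gcongr
      _ = (r / r₀) ^ p * m := by
          rw [← NNReal.rpow_one_add' (by linarith), add_sub_cancel]
  calc ((r * y : ℝ≥0) : ℝ≥0∞) ≤ ((r / r₀) ^ p : ℝ≥0) * (m : ℝ≥0∞) := by exact_mod_cast hgrowth
    _ ≤ ((r / r₀) ^ p : ℝ≥0) * φ r₀ := by gcongr
    _ ≤ φ r := hφ.rpow_div_mul_le (by positivity) hr₀ ((one_le_div₀ hr₀).1 hone)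

theorem IsPenalty.phiStar_ne_top (hp : 1 < p) (hφ : IsPenalty p φ) (y : ℝ≥0) :
    phiStar φ y ≠ ∞ := by
  obtain ⟨R, hR⟩ := hφ.exists_forall_ge_mul_le hp y
  refine ne_top_of_le_ne_top (ENNReal.coe_ne_top (r := R * y)) (iSup_le fun r => ?_)
  rcases le_total r R with hr | hr
  · exact tsub_le_self.trans (by gcongr)
  · rw [tsub_eq_zero_of_le (hR r hr)]
    exact zero_le

end Penalty

section OneStep

variable {d : ℕ} {p : ℝ} {φ : ℝ≥0 → ℝ≥0∞} {m : Measure (Ed d)} {t ε : ℝ} {g : Ed d → ℝ} {K : ℝ≥0}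

/-- The values over which `Sop` takes its supremum. The variable `c` runs over the real upper bounds
of the penalty, which discards the measures `ν` of infinite penalty. -/
def penalizedMeans (p : ℝ) (φ : ℝ≥0 → ℝ≥0∞) (m : Measure (Ed d)) (t : ℝ) (g : Ed d → ℝ)
    (x : Ed d) : Set ℝ :=
  {r | ∃ ν : Measure (Ed d), MemPp p ν ∧ ∃ c : ℝ, 0 ≤ c ∧
    phit φ t (Wp p m ν).toNNReal ≤ ENNReal.ofReal c ∧ r = (∫ y, g (x + y) ∂ν) - c}

theorem integral_mem_penalizedMeans (hp : 0 < p) (hφ0 : φ 0 = 0) (hm : MemPp p m) (t : ℝ)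
    (g : Ed d → ℝ) (x : Ed d) : ∫ y, g (x + y) ∂m ∈ penalizedMeans p φ m t g x :=
  ⟨m, hm, 0, le_rfl, by simp [Wp_self hp, phit_zero_right hφ0], (sub_zero _).symm⟩

theorem mul_Wp_le_add_mul_phiStar (hφK : phiStar φ K ≠ ∞) {ν : Measure (Ed d)} {c : ℝ}
    (hc : 0 ≤ c) (hpen : phit φ t (Wp p m ν).toNNReal ≤ ENNReal.ofReal c) :
    K * Wp p m ν ≤ c + t.toNNReal * (phiStar φ K).toReal := by
  have hyoung : (((Wp p m ν).toNNReal * K : ℝ≥0) : ℝ≥0∞)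
      ≤ ENNReal.ofReal c + t.toNNReal * phiStar φ K :=
    (mul_le_phit_add_mul_phiStar φ t _ K).trans (by gcongr)
  have hreal := ENNReal.toReal_mono (by finiteness) hyoung
  rw [ENNReal.toReal_add (by finiteness) (by finiteness), ENNReal.toReal_ofReal hc,
    ENNReal.toReal_mul, ENNReal.coe_toReal, ENNReal.coe_toReal, NNReal.coe_mul,
    Real.coe_toNNReal _ Wp_nonneg] at hreal
  linarith

theorem le_of_mem_penalizedMeans (hp : 1 ≤ p) (hφK : phiStar φ K ≠ ∞) (hm : MemPp p m)
    (hg : UniformContinuous g) (hK : CoarselyLipschitzWith K ε g) {x : Ed d} {r : ℝ}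
    (hr : r ∈ penalizedMeans p φ m t g x) :
    r ≤ ∫ y, g (x + y) ∂m + (t.toNNReal * (phiStar φ K).toReal + ε) := by
  obtain ⟨ν, hν, c, hc, hpen, rfl⟩ := hr
  have htransport := le_of_abs_le (abs_integral_sub_le_mul_Wp_add hp hm hν (hK.comp_add_left x)
    (hm.integrable_comp_add hp hg x) (hν.integrable_comp_add hp hg x))
  linarith [mul_Wp_le_add_mul_phiStar hφK hc hpen]

theorem Sop_le_integral_add (hp : 1 ≤ p) (hφ0 : φ 0 = 0) (hφK : phiStar φ K ≠ ∞) (hm : MemPp p m)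
    (hg : UniformContinuous g) (hK : CoarselyLipschitzWith K ε g) (x : Ed d) :
    Sop p φ m t g x ≤ ∫ y, g (x + y) ∂m + (t.toNNReal * (phiStar φ K).toReal + ε) :=
  csSup_le ⟨_, integral_mem_penalizedMeans (by positivity) hφ0 hm t g x⟩
    fun _ => le_of_mem_penalizedMeans hp hφK hm hg hK

theorem bddAbove_penalizedMeans (hp : 1 ≤ p) (hφ : ∀ y, phiStar φ y ≠ ∞) (hm : MemPp p m)
    (hg : UniformContinuous g) (x : Ed d) : BddAbove (penalizedMeans p φ m t g x) := by
  obtain ⟨K, hK⟩ := exists_coarselyLipschitzWith_of_uniformContinuous hg one_pos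
  exact ⟨_, fun _ => le_of_mem_penalizedMeans hp (hφ K) hm hg hK⟩

theorem integral_le_Sop (hp : 1 ≤ p) (hφ0 : φ 0 = 0) (hφ : ∀ y, phiStar φ y ≠ ∞) (hm : MemPp p m)
    (hg : UniformContinuous g) (x : Ed d) : ∫ y, g (x + y) ∂m ≤ Sop p φ m t g x :=
  le_csSup (bddAbove_penalizedMeans hp hφ hm hg x)
    (integral_mem_penalizedMeans (by positivity) hφ0 hm t g x)

theorem coarselyLipschitzWith_integral_add (hp : 1 ≤ p) (hm : MemPp p m)
    (hg : UniformContinuous g) (hK : CoarselyLipschitzWith K ε g) :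
    CoarselyLipschitzWith K ε fun x => ∫ y, g (x + y) ∂m := by
  have := hm.1
  refine .of_le_add fun a b => ?_
  have hb := hm.integrable_comp_add hp hg b
  calc ∫ y, g (a + y) ∂m ≤ ∫ y, (g (b + y) + (K * dist a b + ε)) ∂m :=
        integral_mono (hm.integrable_comp_add hp hg a) (hb.add (integrable_const _)) fun y => by
          simpa only [dist_add_right] using hK.le_add (a + y) (b + y)
    _ = ∫ y, g (b + y) ∂m + (K * dist a b + ε) := by
        rw [integral_add hb (integrable_const _)]
        simp

theorem coarselyLipschitzWith_Sop (hp : 1 ≤ p) (hφ0 : φ 0 = 0) (hφ : ∀ y, phiStar φ y ≠ ∞)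
    (hm : MemPp p m) (hg : UniformContinuous g) (hK : CoarselyLipschitzWith K ε g) :
    CoarselyLipschitzWith K ε (Sop p φ m t g) := by
  refine .of_le_add fun a b =>
    csSup_le ⟨_, integral_mem_penalizedMeans (by positivity) hφ0 hm t g a⟩ ?_
  rintro _ ⟨ν, hν, c, hc, hpen, rfl⟩
  have hmean := (coarselyLipschitzWith_integral_add hp hν hg hK).le_add a b
  have hmem : (∫ y, g (b + y) ∂ν) - c ≤ Sop p φ m t g b :=
    le_csSup (bddAbove_penalizedMeans hp hφ hm hg b) ⟨ν, hν, c, hc, hpen, rfl⟩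
  linarith

theorem uniformContinuous_integral_add (hp : 1 ≤ p) (hm : MemPp p m) (hg : UniformContinuous g) :
    UniformContinuous fun x => ∫ y, g (x + y) ∂m :=
  uniformContinuous_of_forall_coarselyLipschitzWith fun _ hε =>
    (exists_coarselyLipschitzWith_of_uniformContinuous hg hε).imp fun _ hK =>
      coarselyLipschitzWith_integral_add hp hm hg hK

theorem uniformContinuous_Sop (hp : 1 ≤ p) (hφ0 : φ 0 = 0) (hφ : ∀ y, phiStar φ y ≠ ∞)
    (hm : MemPp p m) (hg : UniformContinuous g) : UniformContinuous (Sop p φ m t g) :=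
  uniformContinuous_of_forall_coarselyLipschitzWith fun _ hε =>
    (exists_coarselyLipschitzWith_of_uniformContinuous hg hε).imp fun _ hK =>
      coarselyLipschitzWith_Sop hp hφ0 hφ hm hg hK

end OneStep

namespace IsConvSemigroup

variable {d : ℕ} {p : ℝ} {φ : ℝ≥0 → ℝ≥0∞} {μ : ℝ → Measure (Ed d)} {f : Ed d → ℝ}

theorem memPp (hμ : IsConvSemigroup p μ) {t : ℝ} (ht : 0 ≤ t) : MemPp p (μ t) := hμ.2.2 t ht

theorem Smu_add (hp : 1 ≤ p) (hμ : IsConvSemigroup p μ) (hf : UniformContinuous f) {s t : ℝ}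
    (hs : 0 ≤ s) (ht : 0 ≤ t) (x : Ed d) : Smu μ (s + t) f x = Smu μ s (Smu μ t f) x := by
  have := (hμ.memPp hs).1
  have := (hμ.memPp ht).1
  have hint : Integrable (fun y => f (x + y)) ((μ s).conv (μ t)) := by
    rw [← hμ.2.1 s t hs ht]
    exact (hμ.memPp (add_nonneg hs ht)).integrable_comp_add hp hf x
  simp only [Smu, hμ.2.1 s t hs ht, integral_conv hint, add_assoc]

theorem uniformContinuous_iterate_Sop (hp : 1 ≤ p) (hφ0 : φ 0 = 0) (hφ : ∀ y, phiStar φ y ≠ ∞)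
    (hμ : IsConvSemigroup p μ) {s : ℝ} (hs : 0 ≤ s) (hf : UniformContinuous f) (k : ℕ) :
    UniformContinuous ((Sop p φ (μ s) s)^[k] f) := by
  induction k with
  | zero => exact hf
  | succ k ih =>
    rw [Function.iterate_succ_apply']
    exact uniformContinuous_Sop hp hφ0 hφ (hμ.memPp hs) ih

theorem Smu_le_iterate_Sop (hp : 1 ≤ p) (hφ0 : φ 0 = 0) (hφ : ∀ y, phiStar φ y ≠ ∞)
    (hμ : IsConvSemigroup p μ) (hf : UniformContinuous f) {s r : ℝ} (hs : 0 ≤ s) (hr : 0 ≤ r)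
    (k : ℕ) (x : Ed d) :
    Smu μ (k * s + r) f x ≤ (Sop p φ (μ s) s)^[k] (Sop p φ (μ r) r f) x := by
  induction k generalizing x with
  | zero => simpa [Smu] using integral_le_Sop hp hφ0 hφ (hμ.memPp hr) hf x
  | succ k ih =>
    have hks : 0 ≤ k * s + r := by positivity
    have hms := hμ.memPp hs
    have hiter := hμ.uniformContinuous_iterate_Sop hp hφ0 hφ hs
      (uniformContinuous_Sop (t := r) hp hφ0 hφ (hμ.memPp hr) hf) k
    have hSmu := uniformContinuous_integral_add hp (hμ.memPp hks) hf
    have htime : ((k + 1 : ℕ) : ℝ) * s + r = s + (k * s + r) := by push_cast; ring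
    rw [htime, hμ.Smu_add hp hf hs hks, Function.iterate_succ_apply']
    exact (integral_mono (hms.integrable_comp_add hp hSmu x) (hms.integrable_comp_add hp hiter x)
      fun y => ih (x + y)).trans (integral_le_Sop hp hφ0 hφ hms hiter x)

theorem Smu_le_SiterN (hp : 1 ≤ p) (hφ0 : φ 0 = 0) (hφ : ∀ y, phiStar φ y ≠ ∞)
    (hμ : IsConvSemigroup p μ) (hf : UniformContinuous f) {t : ℝ} (ht : 0 ≤ t) (n : ℕ)
    (x : Ed d) : Smu μ t f x ≤ SiterN p φ μ n t f x := by
  have hstep : (0 : ℝ) ≤ (2 ^ n)⁻¹ := by positivity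
  have hrest : 0 ≤ t - ⌊(2 : ℝ) ^ n * t⌋₊ * ((2 : ℝ) ^ n)⁻¹ := by
    rw [sub_nonneg, ← div_eq_mul_inv, div_le_iff₀' (by positivity)]
    exact Nat.floor_le (by positivity)
  have hiter := hμ.Smu_le_iterate_Sop hp hφ0 hφ hf hstep hrest ⌊(2 : ℝ) ^ n * t⌋₊ x
  rwa [add_sub_cancel] at hiter

theorem Smu_le_Slim (hp : 1 ≤ p) (hφ0 : φ 0 = 0) (hφ : ∀ y, phiStar φ y ≠ ∞)
    (hμ : IsConvSemigroup p μ) (hf : UniformContinuous f) {t : ℝ} (ht : 0 ≤ t) (x : Ed d) :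
    Smu μ t f x ≤ Slim p φ μ t f x :=
  le_ciInf fun n => hμ.Smu_le_SiterN hp hφ0 hφ hf ht n x

-- For `t < 1` the iterate with `n = 0` consists of the single step `S(t)`.
theorem Slim_le_Sop (hp : 1 ≤ p) (hφ0 : φ 0 = 0) (hφ : ∀ y, phiStar φ y ≠ ∞)
    (hμ : IsConvSemigroup p μ) (hf : UniformContinuous f) {t : ℝ} (ht : 0 ≤ t) (ht1 : t < 1)
    (x : Ed d) : Slim p φ μ t f x ≤ Sop p φ (μ t) t f x := by
  have hbdd : BddBelow (range fun n => SiterN p φ μ n t f x) :=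
    ⟨Smu μ t f x, forall_mem_range.2 fun n => hμ.Smu_le_SiterN hp hφ0 hφ hf ht n x⟩
  have hzero : SiterN p φ μ 0 t f x = Sop p φ (μ t) t f x := by
    simp [SiterN, Nat.floor_eq_zero.2 ht1]
  exact hzero ▸ ciInf_le hbdd 0

theorem abs_Smu_sub_le (hp : 1 ≤ p) (hμ : IsConvSemigroup p μ) (hf : UniformContinuous f)
    {K : ℝ≥0} {ε : ℝ} (hK : CoarselyLipschitzWith K ε f) {t : ℝ} (ht : 0 ≤ t) (x : Ed d) :
    |Smu μ t f x - f x| ≤ K * Wp p (μ t) (Measure.dirac 0) + ε := by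
  have hdirac : MemPp p (Measure.dirac (0 : Ed d)) := .dirac_zero (by positivity)
  have htransport := abs_integral_sub_le_mul_Wp_add hp (hμ.memPp ht) hdirac (hK.comp_add_left x)
    ((hμ.memPp ht).integrable_comp_add hp hf x) (hdirac.integrable_comp_add hp hf x)
  rwa [integral_dirac, add_zero, abs_sub_comm] at htransport

theorem abs_Slim_sub_le (hp : 1 ≤ p) (hφ0 : φ 0 = 0) (hφ : ∀ y, phiStar φ y ≠ ∞)
    (hμ : IsConvSemigroup p μ) (hf : UniformContinuous f) {K : ℝ≥0} {ε : ℝ}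
    (hK : CoarselyLipschitzWith K ε f) {t : ℝ} (ht : 0 ≤ t) (ht1 : t < 1) (x : Ed d) :
    |Slim p φ μ t f x - f x|
      ≤ K * Wp p (μ t) (Measure.dirac 0) + t * (phiStar φ K).toReal + 2 * ε := by
  have hε : 0 ≤ ε := by simpa using hK x x
  have hpen : 0 ≤ t * (phiStar φ K).toReal := by positivity
  have hlow := hμ.Smu_le_Slim hp hφ0 hφ hf ht x
  have hupp := (hμ.Slim_le_Sop hp hφ0 hφ hf ht ht1 x).trans
    (Sop_le_integral_add hp hφ0 (hφ K) (hμ.memPp ht) hf hK x)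
  rw [← Smu, Real.coe_toNNReal t ht] at hupp
  have hlevy := abs_le.1 (hμ.abs_Smu_sub_le hp hf hK ht x)
  exact abs_le.2 ⟨by linarith [hlevy.1], by linarith [hlevy.2]⟩

end IsConvSemigroup

theorem stmt_8_general {d : ℕ} {p : ℝ} (hp : 1 ≤ p) {φ : ℝ≥0 → ℝ≥0∞} (hφ0 : φ 0 = 0)
    (hφ : ∀ y, phiStar φ y ≠ ∞) {μ : ℝ → Measure (Ed d)} (hμ : IsConvSemigroup p μ)
    (hμ0 : WContinuousAtZero p μ) {f : Ed d → ℝ} (hf : UniformContinuous f) :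
    TendstoUniformly (fun t x => Slim p φ μ t f x) f (𝓝[>] (0 : ℝ)) := by
  refine Metric.tendstoUniformly_iff.2 fun ε hε => ?_
  obtain ⟨K, hK⟩ := exists_coarselyLipschitzWith_of_uniformContinuous hf (by positivity : 0 < ε / 4)
  have htime : Tendsto (fun t : ℝ => t) (𝓝[>] 0) (𝓝 0) := tendsto_id.mono_left nhdsWithin_le_nhds
  have hsmall : Tendsto
      (fun t => K * Wp p (μ t) (Measure.dirac 0) + t * (phiStar φ K).toReal) (𝓝[>] 0) (𝓝 0) := by
    simpa using (hμ0.const_mul (K : ℝ)).add (htime.mul_const (phiStar φ K).toReal)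
  filter_upwards [hsmall.eventually_lt_const (half_pos hε), htime.eventually_lt_const one_pos,
    self_mem_nhdsWithin] with t hbound ht1 ht x
  rw [dist_comm, Real.dist_eq]
  linarith [hμ.abs_Slim_sub_le hp hφ0 hφ hf hK (mem_Ioi.1 ht).le ht1 x]

/-- strong continuity at zero, `lim_{t↓0} ‖𝒮(t)f − f‖_∞ = 0`. -/
theorem stmt_8 (d : ℕ) (hd : 1 ≤ d) (p : ℝ) (hp : 1 < p)
    (φ : ℝ≥0 → ℝ≥0∞) (hφ : IsPenalty p φ)
    (μ : ℝ → Measure (Ed d)) (hμ : IsConvSemigroup p μ) (hμ0 : WContinuousAtZero p μ)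
    (f : C₀(Ed d, ℝ)) :
    TendstoUniformly (fun t x => Slim p φ μ t (⇑f) x) (⇑f) (𝓝[>] (0:ℝ)) :=
  stmt_8_general hp.le hφ.map_zero (hφ.phiStar_ne_top hp) hμ hμ0
    (ZeroAtInftyContinuousMap.uniformContinuous f)
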